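/- arXiv:2004.07498 — 2 statements merged into one kernel-verified Lean document; each statement's English description precedes it below -/
import Mathlib

section
/- Let T be a finite set of real numbers (the attribute values of the tuples), and for a set I ⊆ ℝ let sel(I) denote the number of elements of T lying in I. Let c_r ≥ 0 and c_e ≥ 0 be real constants (the per-tuple read cost and per-tuple policy-evaluation cost). Let [v1x, v2x] and [v1y, v2y] be closed intervals with v1x ≤ v2x and v1y ≤ v2y. If [v1x, v2x] ∩ [v1y, v2y] = ∅, then merging the two guards is never beneficial: sel([min(v1x,v1y), max(v2x,v2y)]) · (c_r + 2·c_e) ≥ sel([v1x, v2x]) · (c_r + c_e) + sel([v1y, v2y]) · (c_r + c_e). -/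
/-!
Disjoint ranges select disjoint sets of tuples, all of which lie in the merged range, so the
merged guard reads at least as many tuples as the two guards together, and it checks each of them
against at least as many policies.
-/

section GuardCost

variable {α R : Type*}

/-- The selectivity `sel(s)` of a guard, encoded as the number of attribute values in `T` that lie
in its range `s`; tuples are thus identified with their attribute values. -/
def selectivity (T : Finset α) (s : Set α) [DecidablePred (· ∈ s)] : ℕ :=
  (T.filter (· ∈ s)).card

/-- The cost `sel(s) · (c_r + m · c_e)` of evaluating a guarded expression with range `s` and a
partition of `m` policies. Only the size of the partition is recorded. -/
def guardCost [Semiring R] (c_r c_e : R) (T : Finset α) (s : Set α) [DecidablePred (· ∈ s)]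
    (m : ℕ) : R :=
  selectivity T s * (c_r + m * c_e)

theorem selectivity_add_le_of_disjoint (T : Finset α) {s t u : Set α} [DecidablePred (· ∈ s)]
    [DecidablePred (· ∈ t)] [DecidablePred (· ∈ u)] (hst : Disjoint s t) (hsu : s ⊆ u)
    (htu : t ⊆ u) : selectivity T s + selectivity T t ≤ selectivity T u := by
  classical
  have hdisj : Disjoint (T.filter (· ∈ s)) (T.filter (· ∈ t)) :=
    Finset.disjoint_filter.2 fun _ _ hs ht => Set.disjoint_left.1 hst hs ht
  have hsub : T.filter (· ∈ s) ∪ T.filter (· ∈ t) ⊆ T.filter (· ∈ u) :=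
    Finset.union_subset (Finset.monotone_filter_right T fun _ _ h => hsu h)
      (Finset.monotone_filter_right T fun _ _ h => htu h)
  simpa only [selectivity, Finset.card_union_of_disjoint hdisj] using Finset.card_le_card hsub

variable [Semiring R] [PartialOrder R] [IsOrderedRing R]

theorem guardCost_mono_right (c_r : R) {c_e : R} (hce : 0 ≤ c_e) (T : Finset α) (s : Set α)
    [DecidablePred (· ∈ s)] : Monotone (guardCost c_r c_e T s) := by
  intro m n hmn
  unfold guardCost
  gcongr

theorem guardCost_add_le_of_disjoint {c_r c_e : R} (hcr : 0 ≤ c_r) (hce : 0 ≤ c_e) (T : Finset α)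
    {s t u : Set α} [DecidablePred (· ∈ s)] [DecidablePred (· ∈ t)] [DecidablePred (· ∈ u)]
    (hst : Disjoint s t) (hsu : s ⊆ u) (htu : t ⊆ u) (m n : ℕ) :
    guardCost c_r c_e T s m + guardCost c_r c_e T t n ≤ guardCost c_r c_e T u (m + n) := by
  have hsel : (selectivity T s + selectivity T t : R) ≤ selectivity T u := by
    rw [← Nat.cast_add]
    exact Nat.mono_cast (selectivity_add_le_of_disjoint T hst hsu htu)
  have hcost : 0 ≤ c_r + (m + n : ℕ) * c_e := by positivity
  calc guardCost c_r c_e T s m + guardCost c_r c_e T t n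
      ≤ guardCost c_r c_e T s (m + n) + guardCost c_r c_e T t (m + n) :=
        add_le_add (guardCost_mono_right c_r hce T s (Nat.le_add_right m n))
          (guardCost_mono_right c_r hce T t (Nat.le_add_left n m))
    _ = (selectivity T s + selectivity T t) * (c_r + (m + n : ℕ) * c_e) := (add_mul _ _ _).symm
    _ ≤ guardCost c_r c_e T u (m + n) := mul_le_mul_of_nonneg_right hsel hcost

theorem merge_disjoint_guards_not_beneficial_general [Lattice α] [DecidableLE α] {c_r c_e : R}
    (hcr : 0 ≤ c_r) (hce : 0 ≤ c_e) (T : Finset α) {a₁ b₁ a₂ b₂ : α}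
    (hdisj : Disjoint (Set.Icc a₁ b₁) (Set.Icc a₂ b₂)) (m n : ℕ) :
    guardCost c_r c_e T (Set.Icc a₁ b₁) m + guardCost c_r c_e T (Set.Icc a₂ b₂) n ≤
      guardCost c_r c_e T (Set.Icc (a₁ ⊓ a₂) (b₁ ⊔ b₂)) (m + n) :=
  guardCost_add_le_of_disjoint hcr hce T hdisj (Set.Icc_subset_Icc inf_le_left le_sup_left)
    (Set.Icc_subset_Icc inf_le_right le_sup_right) m n

end GuardCost

/-- Theorem 1 of the paper: merging two guards whose closed ranges do not
intersect is never beneficial. `T` is the finite set of attribute values and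
the selectivity of an interval is the number of elements of `T` in it. -/
theorem merge_disjoint_guards_not_beneficial
    (T : Finset ℝ) (c_r c_e : ℝ) (hcr : 0 ≤ c_r) (hce : 0 ≤ c_e)
    (v1x v2x v1y v2y : ℝ) (hx : v1x ≤ v2x) (hy : v1y ≤ v2y)
    (hdisj : Set.Icc v1x v2x ∩ Set.Icc v1y v2y = ∅) :
    ((T.filter (fun t => min v1x v1y ≤ t ∧ t ≤ max v2x v2y)).card : ℝ) *
        (c_r + 2 * c_e) ≥
      ((T.filter (fun t => v1x ≤ t ∧ t ≤ v2x)).card : ℝ) * (c_r + c_e) +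
      ((T.filter (fun t => v1y ≤ t ∧ t ≤ v2y)).card : ℝ) * (c_r + c_e) := by
  simpa [guardCost, selectivity, one_add_one_eq_two] using
    merge_disjoint_guards_not_beneficial_general hcr hce T
      (Set.disjoint_iff_inter_eq_empty.2 hdisj) 1 1
end

section
/- Let A and B be finite sets (the sets of tuples satisfying two candidate guards), with A ∪ B nonempty, and let c_r > 0 and c_e > 0 be real constants. Then merging the two guards is beneficial, i.e. |A ∪ B| · (c_r + 2·c_e) < |A| · (c_r + c_e) + |B| · (c_r + c_e), if and only if |A ∩ B| / |A ∪ B| > c_e / (c_r + c_e). -/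
theorem card_mul_add_card_mul_eq_union_add_inter {α R : Type*} [DecidableEq α]
    [NonAssocSemiring R] (A B : Finset α) (c : R) :
    (A.card : R) * c + (B.card : R) * c =
      ((A ∪ B).card : R) * c + ((A ∩ B).card : R) * c := by
  have incl_excl : (A.card : R) + B.card = (A ∪ B).card + (A ∩ B).card := by
    rw [← Nat.cast_add, ← Nat.cast_add, Finset.card_union_add_card_inter]
  rw [← add_mul, incl_excl, add_mul]

/- Merging costs one extra policy evaluation on each tuple of the union and saves one read and one
evaluation on each tuple of the overlap. -/
theorem merge_beneficial_iff_union_mul_lt_inter_mul {α R : Type*} [DecidableEq α]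
    [NonAssocSemiring R] [PartialOrder R] [IsOrderedCancelAddMonoid R]
    (A B : Finset α) (c_r c_e : R) :
    ((A ∪ B).card : R) * (c_r + 2 * c_e) <
        (A.card : R) * (c_r + c_e) + (B.card : R) * (c_r + c_e) ↔
      ((A ∪ B).card : R) * c_e < ((A ∩ B).card : R) * (c_r + c_e) := by
  have merged_cost : ((A ∪ B).card : R) * (c_r + 2 * c_e) =
      ((A ∪ B).card : R) * (c_r + c_e) + ((A ∪ B).card : R) * c_e := by
    rw [two_mul, ← add_assoc, mul_add _ (c_r + c_e)]
  rw [merged_cost, card_mul_add_card_mul_eq_union_add_inter, add_lt_add_iff_left]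

theorem merge_beneficial_iff_overlap_ratio_general {α K : Type*} [DecidableEq α]
    [Semifield K] [PartialOrder K] [IsStrictOrderedRing K] [PosMulReflectLT K]
    (A B : Finset α) (hAB : (A ∪ B).Nonempty) (c_r c_e : K) (hc : 0 < c_r + c_e) :
    ((A ∪ B).card : K) * (c_r + 2 * c_e) <
        (A.card : K) * (c_r + c_e) + (B.card : K) * (c_r + c_e) ↔
      c_e / (c_r + c_e) < ((A ∩ B).card : K) / ((A ∪ B).card : K) := by
  have hU : (0 : K) < (A ∪ B).card := Nat.cast_pos.mpr hAB.card_pos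
  rw [merge_beneficial_iff_union_mul_lt_inter_mul, div_lt_div_iff₀ hc hU, mul_comm c_e]

/-- Equation 9 of the paper: merging two single-policy guards with tuple sets
`A` and `B` is beneficial iff the overlap ratio `|A ∩ B| / |A ∪ B|` exceeds
`c_e / (c_r + c_e)`. -/
theorem merge_beneficial_iff_overlap_ratio
    {α : Type*} [DecidableEq α] (A B : Finset α) (hAB : (A ∪ B).Nonempty)
    (c_r c_e : ℝ) (hcr : 0 < c_r) (hce : 0 < c_e) :
    (((A ∪ B).card : ℝ) * (c_r + 2 * c_e) <
        (A.card : ℝ) * (c_r + c_e) + (B.card : ℝ) * (c_r + c_e)) ↔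
      ((A ∩ B).card : ℝ) / ((A ∪ B).card : ℝ) > c_e / (c_r + c_e) :=
  merge_beneficial_iff_overlap_ratio_general A B hAB c_r c_e (add_pos hcr hce)
end
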